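/- As n → ∞, the ratio combination T_{n+2}/T_n − T_{n+1}²/T_n² is asymptotic to m²·n/log² n; more precisely, T_{n+2}/T_n − T_{n+1}²/T_n² = (m²·n/log² n)·(1 + o(1)). -/

import Mathlib

open Filter

def Tnk (m c : ℕ) : ℕ → ℕ → ℕ
  | 0, 0 => 1
  | 0, _ + 1 => 0
  | n + 1, 0 => c * Tnk m c n 0
  | n + 1, k + 1 => Tnk m c n k + (m * (k + 1) + c) * Tnk m c n (k + 1)

def Ttot (m c n : ℕ) : ℕ := ∑ k ∈ Finset.range (n + 1), Tnk m c n k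

lemma hasSum_of {f g : ℕ → ℝ} {x y : ℝ} (h : HasSum f x) (h1 : ∀ k, g k = f k) (h2 : y = x) :
    HasSum g y := by
  rw [h2, show g = f from funext h1]; exact h

lemma Tnk_zero (m c : ℕ) : ∀ n k, n < k → Tnk m c n k = 0
  | 0, 0, h => by omega
  | 0, _ + 1, _ => rfl
  | n + 1, 0, h => by omega
  | n + 1, k + 1, h => by
    simp [Tnk, Tnk_zero m c n k (by omega), Tnk_zero m c n (k+1) (by omega)]

lemma pow_expand (m c x : ℕ) (n : ℕ) :
    ((m : ℝ) * x + c) ^ n = ∑ j ∈ Finset.range (n + 1),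
      (Tnk m c n j : ℝ) * ((m : ℝ) ^ j * (x.descFactorial j : ℝ)) := by
  have key : ∀ j : ℕ, ((m : ℝ) * x + c) * ((m : ℝ) ^ j * (x.descFactorial j : ℝ)) =
      (m : ℝ) ^ (j + 1) * (x.descFactorial (j + 1) : ℝ) +
      (m * j + c) * ((m : ℝ) ^ j * (x.descFactorial j : ℝ)) := by
    intro j
    rw [Nat.descFactorial_succ]
    rcases le_or_gt j x with h | h
    · push_cast [h]; ring
    · rw [Nat.descFactorial_of_lt h]; simp
  induction n with
  | zero => simp [Tnk]
  | succ n ih =>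
    rw [pow_succ', ih, Finset.mul_sum, Finset.sum_range_succ' _ (n + 1)]
    have e1 : ∀ j ∈ Finset.range (n+1), ((m : ℝ) * x + c) * ((Tnk m c n j : ℝ) * ((m : ℝ) ^ j * (x.descFactorial j : ℝ)))
       = (Tnk m c n j : ℝ) * ((m : ℝ) ^ (j + 1) * (x.descFactorial (j + 1) : ℝ)) +
        (m * j + c) * ((Tnk m c n j : ℝ) * ((m : ℝ) ^ j * (x.descFactorial j : ℝ))) := by
      intro j _
      linear_combination (Tnk m c n j : ℝ) * key j
    rw [Finset.sum_congr rfl e1, Finset.sum_add_distrib]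
    have e2 : ∑ j ∈ Finset.range (n+1), ((m:ℝ) * j + c) * ((Tnk m c n j : ℝ) * ((m : ℝ) ^ j * (x.descFactorial j : ℝ)))
      = ∑ j ∈ Finset.range (n+2), ((m:ℝ) * j + c) * ((Tnk m c n j : ℝ) * ((m : ℝ) ^ j * (x.descFactorial j : ℝ))) := by
      rw [Finset.sum_range_succ _ (n+1), Tnk_zero m c n (n+1) (by omega)]; simp
    rw [e2, Finset.sum_range_succ' _ (n+1), ← add_assoc, ← Finset.sum_add_distrib]
    congr 1
    · apply Finset.sum_congr rfl
      intro j _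
      simp only [Tnk]; push_cast; ring
    · simp [Tnk]

lemma hasSum_desc (m : ℕ) (hm : 0 < m) (j : ℕ) :
    HasSum (fun k : ℕ => ((m : ℝ) ^ j * (k.descFactorial j : ℝ)) / ((m : ℝ) ^ k * (k.factorial : ℝ)))
      (Real.exp (1 / m)) := by
  have hm' : (m : ℝ) ≠ 0 := by positivity
  rw [← hasSum_nat_add_iff' j]
  rw [Finset.sum_eq_zero (fun i hi => by
    rw [Nat.descFactorial_of_lt (Finset.mem_range.1 hi)]; simp), sub_zero]
  have h := NormedSpace.expSeries_div_hasSum_exp (1 / (m : ℝ))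
  rw [← Real.exp_eq_exp_ℝ] at h
  refine hasSum_of h (fun k => ?_) rfl
  have h2 := Nat.factorial_mul_descFactorial (show j ≤ k + j by omega)
  rw [Nat.add_sub_cancel] at h2
  rw [← h2]
  have : ((k + j).descFactorial j : ℝ) ≠ 0 := by
    have := Nat.pos_of_ne_zero (mt Nat.descFactorial_eq_zero_iff_lt.1 (show ¬ (k + j < j) by omega))
    positivity
  have h3 : (k.factorial : ℝ) ≠ 0 := by positivity
  push_cast
  rw [one_div, inv_pow, pow_add]
  field_simp

lemma dobinski (m c : ℕ) (hm : 0 < m) (n : ℕ) :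
    HasSum (fun k : ℕ => ((m : ℝ) * k + c) ^ n / ((m : ℝ) ^ k * (k.factorial : ℝ)))
      (Ttot m c n * Real.exp (1 / m)) := by
  have h := hasSum_sum (s := Finset.range (n + 1)) (fun j _ => (hasSum_desc m hm j).mul_left (Tnk m c n j : ℝ))
  rw [← Finset.sum_mul] at h
  refine hasSum_of h (fun k => ?_) ?_
  · rw [pow_expand, Finset.sum_div]
    exact Finset.sum_congr rfl (fun j _ => by ring)
  · simp [Ttot]

/-- Stein identities and their consequences. -/
lemma stein (w : ℕ → ℝ) (κ v s η M W S1 S2 S3 : ℝ) (hw : ∀ k, 0 < w k)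
    (hv : 0 < v) (hs0 : 0 < s) (hη : 0 ≤ η) (hM : 0 ≤ M) (hκ : 0 ≤ κ)
    (h0 : HasSum w W) (h1 : HasSum (fun k : ℕ => ((k : ℝ) - κ) * w k) S1)
    (h2 : HasSum (fun k : ℕ => ((k : ℝ) - κ) ^ 2 * w k) S2)
    (h3 : HasSum (fun k : ℕ => ((k : ℝ) - κ) ^ 3 * w k) S3)
    (hsg : ∀ k : ℕ, 0 ≤ ((k : ℝ) - κ) * (w k - w (k + 1)))
    (hP : ∀ k : ℕ, |((k : ℝ) - κ) / v * w k - (w k - w (k + 1))| ≤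
      η * |(k : ℝ) - κ| / v * w k + M / v ^ 2 * (((k : ℝ) - κ) ^ 2 * |w k - w (k + 1)|))
    (hr : 2 * w 0 ≤ w 1) :
    |S2 / v - (W - (1 + κ) * w 0)| ≤ η * S2 / v + M / v ^ 2 * (6 * S2 + 2 * W) ∧
    |S1 / v - w 0| ≤ η / v * ((S2 / s + s * W) / 2) + M / v ^ 2 * (6 * S2 + 3 * W) ∧
    κ ^ 3 * w 0 ≤ 6 * S2 + 2 * W ∧ 0 ≤ S2 := by
  have g0 := (hasSum_nat_add_iff' 1).2 h0
  have g1 := (hasSum_nat_add_iff' 1).2 h1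
  have g2 := (hasSum_nat_add_iff' 1).2 h2
  have g3 := (hasSum_nat_add_iff' 1).2 h3
  simp only [Finset.sum_range_one] at g0 g1 g2 g3
  push_cast at g0 g1 g2 g3
  have d0 : HasSum (fun k : ℕ => w k - w (k + 1)) (w 0) := by
    exact hasSum_of (h0.sub g0) (fun k => rfl) (by ring)
  have d1 : HasSum (fun k : ℕ => ((k : ℝ) - κ) * (w k - w (k + 1))) (W - (1 + κ) * w 0) := by
    exact hasSum_of ((h1.sub g1).add g0) (fun k => by ring) (by ring)
  have d3 : HasSum (fun k : ℕ => ((k : ℝ) - κ) ^ 3 * (w k - w (k + 1)))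
      (3 * S2 - 3 * S1 + W - (κ + 1) ^ 3 * w 0) := by
    exact hasSum_of ((((h3.sub g3).add (g2.mul_left 3)).sub (g1.mul_left 3)).add g0)
      (fun k => by ring) (by ring)
  have hS2 : 0 ≤ S2 := h2.nonneg (fun k => by have := hw k; positivity)
  have hb : 0 ≤ 3 * S2 + 3 * S1 + W := by
    have := ((h2.mul_left 3).add (h1.mul_left 3)).add h0
    refine this.nonneg (fun k => ?_)
    have := hw k
    have e : 3 * (((k:ℝ) - κ) ^ 2 * w k) + 3 * (((k:ℝ) - κ) * w k) + w k
      = (3 * ((k:ℝ) - κ + 1/2) ^ 2 + 1/4) * w k := by ring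
    rw [e]; positivity
  have hw0 := hw 0
  have hW : 0 ≤ W := h0.nonneg (fun k => (hw k).le)
  have hs3 : ∀ k : ℕ, 0 ≤ ((k : ℝ) - κ) ^ 3 * (w k - w (k + 1)) := by
    intro k
    have e : ((k : ℝ) - κ) ^ 3 * (w k - w (k + 1)) =
      ((k : ℝ) - κ) ^ 2 * (((k : ℝ) - κ) * (w k - w (k + 1))) := by ring
    rw [e]; exact mul_nonneg (sq_nonneg _) (hsg k)
  have hC : 3 * S2 - 3 * S1 + W - (κ + 1) ^ 3 * w 0 ≤ 6 * S2 + 2 * W := by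
    have : 0 ≤ (κ + 1) ^ 3 * w 0 := by positivity
    linarith
  have habs : ∀ k : ℕ, |(k : ℝ) - κ| * |w k - w (k + 1)| = ((k : ℝ) - κ) * (w k - w (k + 1)) := by
    intro k; rw [← abs_mul, abs_of_nonneg (hsg k)]
  refine ⟨?_, ?_, ?_, hS2⟩
  · have hd := (h2.div_const v).sub d1
    have hu := ((h2.mul_left (η / v))).add (d3.mul_left (M / v ^ 2))
    have pt : ∀ k : ℕ, |((k : ℝ) - κ) ^ 2 * w k / v - ((k : ℝ) - κ) * (w k - w (k + 1))| ≤
        η / v * (((k : ℝ) - κ) ^ 2 * w k) + M / v ^ 2 * (((k : ℝ) - κ) ^ 3 * (w k - w (k + 1))) := by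
      intro k
      have := mul_le_mul_of_nonneg_left (hP k) (abs_nonneg ((k:ℝ) - κ))
      rw [← abs_mul] at this
      calc _ = |((k : ℝ) - κ) * (((k : ℝ) - κ) / v * w k - (w k - w (k + 1)))| := by
              congr 1; ring
        _ ≤ _ := this
        _ = η / v * (|(k : ℝ) - κ| ^ 2 * w k) + M / v ^ 2 * (((k : ℝ) - κ) ^ 2 *
              (|(k : ℝ) - κ| * |w k - w (k + 1)|)) := by ring
        _ = _ := by rw [sq_abs, habs]; ring
    have b1 := hasSum_le (fun k => (abs_le.1 (pt k)).2) hd hu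
    have b2 := hasSum_le (fun k => (abs_le.1 (pt k)).1) hu.neg hd
    have : M / v ^ 2 * (3 * S2 - 3 * S1 + W - (κ + 1) ^ 3 * w 0) ≤ M / v ^ 2 * (6 * S2 + 2 * W) :=
      mul_le_mul_of_nonneg_left hC (by positivity)
    have e : η / v * S2 = η * S2 / v := by ring
    rw [abs_le]; constructor <;> linarith
  · have hd := (h1.div_const v).sub d0
    have hu := ((((h2.div_const s).add (h0.mul_left s)).div_const 2).mul_left (η / v)).add
      ((d1.add d3).mul_left (M / v ^ 2))
    have pt : ∀ k : ℕ, |((k : ℝ) - κ) * w k / v - (w k - w (k + 1))| ≤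
        η / v * ((((k : ℝ) - κ) ^ 2 * w k / s + s * w k) / 2) +
          M / v ^ 2 * (((k : ℝ) - κ) * (w k - w (k + 1)) +
            ((k : ℝ) - κ) ^ 3 * (w k - w (k + 1))) := by
      intro k
      have e1 : ((k : ℝ) - κ) ^ 2 * |w k - w (k + 1)| ≤ ((k : ℝ) - κ) * (w k - w (k + 1)) +
            ((k : ℝ) - κ) ^ 3 * (w k - w (k + 1)) := by
        have e : ((k : ℝ) - κ) ^ 3 * (w k - w (k + 1)) =
          |(k : ℝ) - κ| ^ 2 * (|(k : ℝ) - κ| * |w k - w (k + 1)|) := by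
            rw [habs, sq_abs]; ring
        rw [e, ← habs, ← sq_abs]
        have hx := abs_nonneg ((k : ℝ) - κ)
        have hy := abs_nonneg (w k - w (k + 1))
        generalize |(k : ℝ) - κ| = x at *
        generalize |w k - w (k + 1)| = y at *
        have : 0 ≤ y * x * (x ^ 2 - x + 1) := by
          have : 0 ≤ x ^ 2 - x + 1 := by nlinarith [sq_nonneg (x - 1/2)]
          positivity
        linarith
      have e2 : |(k : ℝ) - κ| * w k ≤ (((k : ℝ) - κ) ^ 2 * w k / s + s * w k) / 2 := by
        rw [← sq_abs ((k : ℝ) - κ)]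
        generalize |(k : ℝ) - κ| = x at *
        have : 0 ≤ (x - s) ^ 2 * w k / s := by have := hw k; positivity
        have e : (x - s) ^ 2 * w k / s = x ^ 2 * w k / s + s * w k - 2 * (x * w k) := by
          field_simp; ring
        linarith
      calc _ = |((k : ℝ) - κ) / v * w k - (w k - w (k + 1))| := by congr 1; ring
        _ ≤ _ := hP k
        _ = η / v * (|(k : ℝ) - κ| * w k) + M / v ^ 2 * (((k : ℝ) - κ) ^ 2 * |w k - w (k + 1)|) := by
            ring
        _ ≤ _ := by gcongr
    have b1 := hasSum_le (fun k => (abs_le.1 (pt k)).2) hd hu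
    have b2 := hasSum_le (fun k => (abs_le.1 (pt k)).1) hu.neg hd
    have : M / v ^ 2 * (W - (1 + κ) * w 0 + (3 * S2 - 3 * S1 + W - (κ + 1) ^ 3 * w 0)) ≤
        M / v ^ 2 * (6 * S2 + 3 * W) := by
      refine mul_le_mul_of_nonneg_left ?_ (by positivity)
      have : 0 ≤ (1 + κ) * w 0 := by positivity
      linarith
    rw [abs_le]; constructor <;> linarith
  · have := le_hasSum d3 0 (fun j _ => hs3 j)
    simp only [Nat.cast_zero, zero_add, zero_sub] at this
    have h' : κ ^ 3 * w 0 ≤ (-κ) ^ 3 * (w 0 - w 1) := by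
      have : 0 ≤ κ ^ 3 * (w 1 - 2 * w 0) := mul_nonneg (by positivity) (by linarith)
      linarith
    linarith

lemma pointwise (G : ℝ → ℝ) (κ v δ : ℝ) (hG : ∀ x y, 0 ≤ x → x ≤ y → G y ≤ G x)
    (hκ : G κ = 0) (hκ0 : 0 ≤ κ) (hv : 0 < v) (hδ : 0 < δ) (hδ' : δ ≤ 1 / 10) (hδv : δ * v ≤ κ)
    (hwin : ∀ y, 0 ≤ y → |y - κ| ≤ δ * v → |G y + (y - κ) / v| ≤ δ * |y - κ| / v)
    (y : ℝ) (hy : 0 ≤ y) :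
    0 ≤ (y - κ) * (1 - Real.exp (G y)) ∧
    |(y - κ) / v - (1 - Real.exp (G y))| ≤
      5 * δ * |y - κ| / v + (3 / δ ^ 2) / v ^ 2 * ((y - κ) ^ 2 * |1 - Real.exp (G y)|) := by
  constructor
  · rcases le_total y κ with h | h
    · have := hG y κ hy h
      have : 1 ≤ Real.exp (G y) := Real.one_le_exp (by linarith)
      exact mul_nonneg_of_nonpos_of_nonpos (by linarith) (by linarith)
    · have := hG κ y hκ0 h
      have : Real.exp (G y) ≤ 1 := Real.exp_le_one_iff.2 (by linarith)
      exact mul_nonneg (by linarith) (by linarith)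
  have inn : ∀ y, 0 ≤ y → |y - κ| ≤ δ * v →
      |(y - κ) / v - (1 - Real.exp (G y))| ≤ 5 * δ * |y - κ| / v := by
    intro y hy h
    have h1 := hwin y hy h
    set u := |y - κ| / v with hu
    have hu0 : 0 ≤ u := by positivity
    have hu1 : u ≤ δ := by rw [hu, div_le_iff₀ hv]; exact h
    have hab : |(y - κ) / v| = u := by rw [abs_div, abs_of_pos hv]
    have e1 : δ * |y - κ| / v = δ * u := by rw [hu]; ring
    have e2 : 5 * δ * |y - κ| / v = 5 * δ * u := by rw [hu]; ring
    rw [e1] at h1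
    rw [e2]
    have h2 : |G y| ≤ (1 + δ) * u := by
      have : |G y| ≤ |G y + (y - κ) / v| + |(y - κ) / v| := by
        have := abs_sub (G y + (y - κ) / v) ((y - κ) / v)
        simpa using this
      linarith
    have h3 : |G y| ≤ 1 := by nlinarith
    have h4 := Real.abs_exp_sub_one_sub_id_le h3
    have h5 : (G y) ^ 2 ≤ 4 * δ * u := by
      rw [← sq_abs]
      have : |G y| ^ 2 ≤ ((1 + δ) * u) ^ 2 := by gcongr
      have h6 : u ^ 2 ≤ δ * u := by nlinarith
      have h7 : (1 + δ) ^ 2 ≤ 4 := by nlinarith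
      calc |G y| ^ 2 ≤ (1 + δ) ^ 2 * u ^ 2 := by rw [← mul_pow]; exact this
        _ ≤ 4 * (δ * u) := by gcongr
        _ = _ := by ring
    calc |(y - κ) / v - (1 - Real.exp (G y))|
        = |(G y + (y - κ) / v) + (Real.exp (G y) - 1 - G y)| := by congr 1; ring
      _ ≤ _ := abs_add_le _ _
      _ ≤ δ * u + 4 * δ * u := by linarith
      _ = _ := by ring
  have hdv : 0 < δ * v := by positivity
  rcases le_or_gt |y - κ| (δ * v) with h | h
  · refine (inn y hy h).trans (le_add_of_nonneg_right (by positivity))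
  · have hhalf : δ / 2 ≤ |1 - Real.exp (G y)| := by
      rcases le_total y κ with hle | hle
      · rw [abs_of_nonpos (by linarith)] at h
        have b := inn (κ - δ * v) (by linarith) (by simp [abs_of_pos hdv])
        have e : |κ - δ * v - κ| = δ * v := by simp [abs_of_pos hdv]
        rw [e] at b
        have e2 : 5 * δ * (δ * v) / v = 5 * δ * δ := by field_simp
        have e3 : (κ - δ * v - κ) / v = - δ := by field_simp; ring
        rw [e2, e3] at b
        have b2 := (abs_le.1 b).1
        have mono := Real.exp_le_exp.2 (hG y (κ - δ * v) hy (by linarith))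
        rw [abs_sub_comm]
        refine le_trans ?_ (le_abs_self _)
        nlinarith
      · rw [abs_of_nonneg (by linarith)] at h
        have b := inn (κ + δ * v) (by linarith) (by simp [abs_of_pos hdv])
        have e : |κ + δ * v - κ| = δ * v := by simp [abs_of_pos hdv]
        rw [e] at b
        have e2 : 5 * δ * (δ * v) / v = 5 * δ * δ := by field_simp
        have e3 : (κ + δ * v - κ) / v = δ := by field_simp; ring
        rw [e2, e3] at b
        have b2 := (abs_le.1 b).2
        have mono := Real.exp_le_exp.2 (hG (κ + δ * v) y (by linarith) (by linarith))
        refine le_trans ?_ (le_abs_self _)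
        nlinarith
    have tri : |(y - κ) / v - (1 - Real.exp (G y))| ≤ |y - κ| / v + |1 - Real.exp (G y)| := by
      have := abs_sub ((y - κ) / v) (1 - Real.exp (G y))
      rwa [abs_div, abs_of_pos hv] at this
    rw [← sq_abs (y - κ)]
    have hp : 0 ≤ 5 * δ * |y - κ| / v := by positivity
    refine tri.trans (le_trans ?_ (le_add_of_nonneg_left hp))
    generalize |y - κ| = t at *
    generalize |1 - Real.exp (G y)| = q at *
    have ht : 0 < t := by linarith
    have hq : 0 < q := by linarith
    have a1 : t / v ≤ (2 / δ ^ 2) / v ^ 2 * (t ^ 2 * q) := by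
      have : t / v = (2 / δ ^ 2) / v ^ 2 * (t * (δ * v) * (δ / 2)) := by field_simp
      rw [this]
      have : t * (δ * v) * (δ / 2) ≤ t * t * q := by gcongr
      rw [sq t]
      gcongr
    have a2 : q ≤ (1 / δ ^ 2) / v ^ 2 * (t ^ 2 * q) := by
      have : q = (1 / δ ^ 2) / v ^ 2 * ((δ * v) ^ 2 * q) := by field_simp
      conv_lhs => rw [this]
      gcongr
    have : (3 / δ ^ 2) / v ^ 2 * (t ^ 2 * q) = (2 / δ ^ 2) / v ^ 2 * (t ^ 2 * q)
      + (1 / δ ^ 2) / v ^ 2 * (t ^ 2 * q) := by ring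
    linarith

noncomputable def GG (a m n y : ℝ) : ℝ :=
  n * (Real.log (y + 1 + a) - Real.log (y + a)) - Real.log (y + 1) - Real.log m

lemma GG_deriv (a m n y : ℝ) (ha : 0 < a) (hy : 0 ≤ y) :
    HasDerivAt (GG a m n) (n * (1 / (y + 1 + a) - 1 / (y + a)) - 1 / (y + 1)) y := by
  unfold GG
  have h1 : HasDerivAt (fun y : ℝ => Real.log (y + 1 + a)) (1 / (y + 1 + a)) y :=
    (((hasDerivAt_id y).add_const 1).add_const a).log (by simp; positivity)
  have h2 : HasDerivAt (fun y : ℝ => Real.log (y + a)) (1 / (y + a)) y :=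
    ((hasDerivAt_id y).add_const a).log (by simp; positivity)
  have h3 : HasDerivAt (fun y : ℝ => Real.log (y + 1)) (1 / (y + 1)) y :=
    ((hasDerivAt_id y).add_const 1).log (by simp; positivity)
  exact (((h1.sub h2).const_mul n).sub h3).sub_const _

lemma GG_anti (a m n : ℝ) (ha : 0 < a) (hn : 0 ≤ n) (x y : ℝ) (hx : 0 ≤ x) (hxy : x ≤ y) :
    GG a m n y ≤ GG a m n x := by
  unfold GG
  have h1 : Real.log (x + 1) ≤ Real.log (y + 1) := Real.log_le_log (by linarith) (by linarith)
  have h2 : Real.log (y + 1 + a) - Real.log (y + a) ≤ Real.log (x + 1 + a) - Real.log (x + a) := by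
    rw [← Real.log_div (by linarith) (by linarith), ← Real.log_div (by linarith) (by linarith)]
    have : 0 < x + a := by linarith
    have : 0 < y + a := by linarith
    apply Real.log_le_log (by apply div_pos <;> linarith)
    rw [div_le_div_iff₀ (by linarith) (by linarith)]
    nlinarith
  have := mul_le_mul_of_nonneg_left h2 hn
  linarith

lemma window (a m n κ δ : ℝ) (ha : 0 < a) (hn : 0 < n) (hδ : 0 < δ) (hδ' : δ ≤ 1 / 10)
    (hκ : 20 * (a + 1) / δ ≤ κ) (hκn : κ / n ≤ δ / 20) (h0 : GG a m n κ = 0)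
    (y : ℝ) (hy : |y - κ| ≤ δ * (κ ^ 2 / n)) :
    |GG a m n y + (y - κ) / (κ ^ 2 / n)| ≤ δ * |y - κ| / (κ ^ 2 / n) := by
  have hκ1 : a + 1 ≤ δ / 20 * κ := by
    rw [div_le_iff₀ hδ] at hκ; linarith
  have hκ0 : 0 < κ := by
    by_contra h
    have : δ / 20 * κ ≤ 0 := mul_nonpos_of_nonneg_of_nonpos (by positivity) (by linarith)
    linarith
  set v := κ ^ 2 / n with hv
  have hv0 : 0 < v := by positivity
  have hvκ : v ≤ δ / 20 * κ := by
    have : v = κ / n * κ := by rw [hv]; ring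
    rw [this]; gcongr
  set s := Set.Icc (κ - δ * v) (κ + δ * v) with hs
  have hbd : ∀ x ∈ s, κ - δ / 20 * κ ≤ x ∧ x ≤ κ + δ / 20 * κ := by
    intro x hx
    have : δ * v ≤ 1 * v := by gcongr; linarith
    constructor <;> linarith [hx.1, hx.2]
  have hder : ∀ x ∈ s, HasDerivWithinAt (fun x => GG a m n x + x / v)
      (n * (1 / (x + 1 + a) - 1 / (x + a)) - 1 / (x + 1) + 1 / v) s x := by
    intro x hx
    have hx0 : 0 ≤ x := by nlinarith [(hbd x hx).1]
    exact ((GG_deriv a m n x ha hx0).add ((hasDerivAt_id x).div_const v)).hasDerivWithinAt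
  have hb : ∀ x ∈ s, ‖n * (1 / (x + 1 + a) - 1 / (x + a)) - 1 / (x + 1) + 1 / v‖ ≤ δ / v := by
    intro x hx
    obtain ⟨l, u⟩ := hbd x hx
    have hx0 : 0 < x := by nlinarith
    have e : n * (1 / (x + 1 + a) - 1 / (x + a)) - 1 / (x + 1) + 1 / v =
      (1 - κ ^ 2 / ((x + a) * (x + 1 + a)) - κ / n * (κ / (x + 1))) / v := by
      rw [hv]; field_simp; ring
    rw [e, Real.norm_eq_abs, abs_div, abs_of_pos hv0]
    gcongr
    have hP1 : (x + a) * (x + 1 + a) ≤ κ ^ 2 * (1 + δ / 4) := by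
      have : (x + a) * (x + 1 + a) ≤ (κ * (1 + δ / 10)) * (κ * (1 + δ / 10)) := by
        apply mul_le_mul <;> nlinarith
      have h2 : (1 + δ / 10) * (1 + δ / 10) ≤ 1 + δ / 4 := by nlinarith
      calc _ ≤ _ := this
        _ = κ ^ 2 * ((1 + δ / 10) * (1 + δ / 10)) := by ring
        _ ≤ _ := by gcongr
    have hP2 : κ ^ 2 * (1 - δ / 10) ≤ (x + a) * (x + 1 + a) := by
      have : (κ * (1 - δ / 20)) * (κ * (1 - δ / 20)) ≤ (x + a) * (x + 1 + a) := by
        apply mul_le_mul <;> nlinarith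
      have h2 : 1 - δ / 10 ≤ (1 - δ / 20) * (1 - δ / 20) := by nlinarith
      calc _ ≤ κ ^ 2 * ((1 - δ / 20) * (1 - δ / 20)) := by gcongr
        _ = _ := by ring
        _ ≤ _ := this
    have hPp : 0 < (x + a) * (x + 1 + a) := by positivity
    have q1 : 1 - δ / 4 ≤ κ ^ 2 / ((x + a) * (x + 1 + a)) := by
      rw [le_div_iff₀ hPp]
      have : (1 - δ / 4) * ((x + a) * (x + 1 + a)) ≤ (1 - δ / 4) * (κ ^ 2 * (1 + δ / 4)) := by
        apply mul_le_mul_of_nonneg_left hP1; linarith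
      have h3 : 0 ≤ κ ^ 2 * (δ / 4) ^ 2 := by positivity
      nlinarith
    have q2 : κ ^ 2 / ((x + a) * (x + 1 + a)) ≤ 1 + δ / 5 := by
      rw [div_le_iff₀ hPp]
      have : (1 + δ / 5) * (κ ^ 2 * (1 - δ / 10)) ≤ (1 + δ / 5) * ((x + a) * (x + 1 + a)) := by
        apply mul_le_mul_of_nonneg_left hP2; linarith
      have h3 : 1 ≤ (1 + δ / 5) * (1 - δ / 10) := by nlinarith
      have : κ ^ 2 * 1 ≤ κ ^ 2 * ((1 + δ / 5) * (1 - δ / 10)) := by gcongr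
      linarith
    have q3 : κ / n * (κ / (x + 1)) ≤ δ / 20 * 2 := by
      have : κ / (x + 1) ≤ 2 := by rw [div_le_iff₀ (by linarith)]; nlinarith
      gcongr
    have q4 : 0 ≤ κ / n * (κ / (x + 1)) := by positivity
    rw [abs_le]; constructor <;> linarith
  have hκs : κ ∈ s := ⟨by nlinarith, by nlinarith⟩
  have hys : y ∈ s := by rw [abs_le] at hy; exact ⟨by linarith, by linarith⟩
  have := (convex_Icc _ _).norm_image_sub_le_of_norm_hasDerivWithin_le hder hb hκs hys
  simp only [Real.norm_eq_abs, h0] at this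
  calc _ = |GG a m n y + y / v - (0 + κ / v)| := by congr 1; ring
    _ ≤ _ := this
    _ = _ := by ring

lemma exists_kappa (a m : ℝ) (n : ℕ) (ha : 0 < a) (hm : 1 ≤ m) (h : 0 ≤ GG a m n 0) :
    ∃ κ, 0 ≤ κ ∧ GG a m n κ = 0 := by
  have hY : GG a m n (n + 2) ≤ 0 := by
    unfold GG
    have h1 : Real.log (n + 2 + 1 + a) - Real.log (n + 2 + a) ≤ 1 / (n + 2 + a) := by
      rw [← Real.log_div (by positivity) (by positivity)]
      refine (Real.log_le_sub_one_of_pos (by positivity)).trans (le_of_eq ?_)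
      field_simp; ring
    have h2 : (n : ℝ) * (1 / (n + 2 + a)) ≤ 1 := by
      rw [mul_one_div, div_le_one (by positivity)]; linarith
    have h3 : 1 ≤ Real.log ((n : ℝ) + 2 + 1) := by
      rw [Real.le_log_iff_exp_le (by positivity)]
      have := Real.exp_one_lt_three
      have : (0:ℝ) ≤ n := by positivity
      linarith
    have h4 := Real.log_nonneg hm
    have := mul_le_mul_of_nonneg_left h1 (Nat.cast_nonneg (α := ℝ) n)
    linarith
  have hc : ContinuousOn (GG a m n) (Set.Icc 0 ((n : ℝ) + 2)) := fun x hx =>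
    (GG_deriv a m n x ha hx.1).continuousAt.continuousWithinAt
  obtain ⟨κ, hκ, e⟩ := intermediate_value_Icc' (by positivity) hc ⟨hY, h⟩
  exact ⟨κ, hκ.1, e⟩

lemma GG_top (a m y : ℝ) (ha : 0 < a) (hy : 0 ≤ y) :
    Tendsto (fun n : ℕ => GG a m n y) atTop atTop := by
  unfold GG
  have : 0 < Real.log (y + 1 + a) - Real.log (y + a) :=
    sub_pos.2 (Real.log_lt_log (by linarith) (by linarith))
  simp only [sub_sub _ _ (Real.log m)]
  simp only [sub_eq_add_neg _ (Real.log (y + 1) + Real.log m)]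
  exact tendsto_atTop_add_const_right _ _ (tendsto_natCast_atTop_atTop.atTop_mul_const this)

/-- the sequence of saddle points -/
lemma exists_seq (a m : ℝ) (ha : 0 < a) (hm : 1 ≤ m) :
    ∃ κ : ℕ → ℝ, (∀ᶠ n : ℕ in atTop, GG a m n (κ n) = 0) ∧ Tendsto κ atTop atTop := by
  have h : ∀ n : ℕ, ∃ κ, 0 ≤ κ ∧ (0 ≤ GG a m n 0 → GG a m n κ = 0) := by
    intro n
    by_cases h : 0 ≤ GG a m n 0
    · obtain ⟨κ, h1, h2⟩ := exists_kappa a m n ha hm h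
      exact ⟨κ, h1, fun _ => h2⟩
    · exact ⟨0, le_rfl, fun h' => absurd h' h⟩
  choose κ h0 h1 using h
  have he : ∀ᶠ n : ℕ in atTop, GG a m n (κ n) = 0 := by
    filter_upwards [(GG_top a m 0 ha le_rfl).eventually_ge_atTop 0] with n hn using h1 n hn
  refine ⟨κ, he, tendsto_atTop.2 fun B => ?_⟩
  filter_upwards [he, (GG_top a m (max B 0) ha (le_max_right _ _)).eventually_gt_atTop 0] with n h2 h3
  by_contra hlt
  push Not at hlt
  have := GG_anti a m n ha (Nat.cast_nonneg n) (κ n) (max B 0) (h0 n) (hlt.le.trans (le_max_left _ _))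
  linarith

lemma seq_asymp (a m : ℝ) (ha : 0 < a) (hm : 1 ≤ m) (κ : ℕ → ℝ)
    (h0 : ∀ᶠ n : ℕ in atTop, GG a m n (κ n) = 0) (hκ : Tendsto κ atTop atTop) :
    Tendsto (fun n : ℕ => κ n * Real.log n / n) atTop (nhds 1) := by
  have hlog : Tendsto (fun n => Real.log (κ n)) atTop atTop := Real.tendsto_log_atTop.comp hκ
  -- n / (κ log κ) → 1
  have hinv : Tendsto (fun n => (κ n)⁻¹) atTop (nhds 0) := tendsto_inv_atTop_zero.comp hκ
  have hlinv : Tendsto (fun n => (Real.log (κ n))⁻¹) atTop (nhds 0) := tendsto_inv_atTop_zero.comp hlog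
  have hL : Tendsto (fun n => Real.log (m * (κ n + 1)) / Real.log (κ n)) atTop (nhds 1) := by
    have h1 : Tendsto (fun n => 1 + (Real.log m + Real.log (1 + (κ n)⁻¹)) * (Real.log (κ n))⁻¹)
        atTop (nhds (1 + (Real.log m + Real.log (1 + 0)) * 0)) := by
      refine tendsto_const_nhds.add (Tendsto.mul (tendsto_const_nhds.add ?_) hlinv)
      exact Tendsto.log (tendsto_const_nhds.add hinv) (by norm_num)
    rw [mul_zero, add_zero] at h1
    refine h1.congr' ?_
    filter_upwards [hκ.eventually_gt_atTop 1] with n hn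
    have hl := Real.log_pos hn
    have hk : 0 < κ n := by linarith
    have : m * (κ n + 1) = κ n * (m * (1 + (κ n)⁻¹)) := by field_simp
    rw [this, Real.log_mul (by positivity) (by positivity), Real.log_mul (by positivity) (by positivity)]
    field_simp
  have hn1 : Tendsto (fun n : ℕ => (n : ℝ) / (κ n * Real.log (κ n))) atTop (nhds 1) := by
    have lo : Tendsto (fun n => (1 + a * (κ n)⁻¹) * (Real.log (m * (κ n + 1)) / Real.log (κ n)))
        atTop (nhds 1) := by
      have := (((hinv.const_mul a).const_add 1).mul hL); simpa using this
    have hi : Tendsto (fun n => (1 + (a + 1) * (κ n)⁻¹) * (Real.log (m * (κ n + 1)) / Real.log (κ n)))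
        atTop (nhds 1) := by
      have := (((hinv.const_mul (a + 1)).const_add 1).mul hL); simpa using this
    have key : ∀ᶠ n : ℕ in atTop, 1 < κ n ∧ (κ n + a) * Real.log (m * (κ n + 1)) ≤ n ∧
        n ≤ (κ n + a + 1) * Real.log (m * (κ n + 1)) := by
      filter_upwards [hκ.eventually_gt_atTop 1, h0] with n hn he
      have hk : 0 < κ n := by linarith
      unfold GG at he
      have e : Real.log (m * (κ n + 1)) = n * (Real.log (κ n + 1 + a) - Real.log (κ n + a)) := by
        rw [Real.log_mul (by positivity) (by positivity)]; linarith
      rw [← Real.log_div (by positivity) (by positivity)] at e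
      have u : Real.log ((κ n + 1 + a) / (κ n + a)) ≤ 1 / (κ n + a) := by
        refine (Real.log_le_sub_one_of_pos (by positivity)).trans (le_of_eq ?_)
        field_simp; ring
      have l : 1 / (κ n + 1 + a) ≤ Real.log ((κ n + 1 + a) / (κ n + a)) := by
        refine le_trans (le_of_eq ?_) (Real.one_sub_inv_le_log_of_pos (by positivity))
        field_simp; ring
      rw [e]
      refine ⟨hn, ?_, ?_⟩
      · calc _ ≤ (κ n + a) * (n * (1 / (κ n + a))) := by gcongr
          _ = n := by field_simp
      · calc (n : ℝ) = (κ n + a + 1) * (n * (1 / (κ n + 1 + a))) := by field_simp; ring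
          _ ≤ _ := by gcongr
    refine tendsto_of_tendsto_of_tendsto_of_le_of_le' lo hi ?_ ?_
    · filter_upwards [key] with n ⟨h1, h2, h3⟩
      have hl := Real.log_pos h1
      have hk : 0 < κ n := by linarith
      rw [le_div_iff₀ (by positivity)]
      refine le_trans (le_of_eq ?_) h2
      field_simp
    · filter_upwards [key] with n ⟨h1, h2, h3⟩
      have hl := Real.log_pos h1
      have hk : 0 < κ n := by linarith
      rw [div_le_iff₀ (by positivity)]
      refine le_trans h3 (le_of_eq ?_)
      field_simp; ring
  have hll : Tendsto (fun n => Real.log (Real.log (κ n)) / Real.log (κ n)) atTop (nhds 0) :=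
    (Real.isLittleO_log_id_atTop.tendsto_div_nhds_zero).comp hlog
  have hln : Tendsto (fun n : ℕ => Real.log n / Real.log (κ n)) atTop (nhds 1) := by
    have h1 := ((hn1.log one_ne_zero).mul hlinv).add (hll.const_add 1)
    simp only [Real.log_one, mul_zero, add_zero, zero_add] at h1
    refine h1.congr' ?_
    filter_upwards [hκ.eventually_gt_atTop 1, eventually_gt_atTop 0] with n hn hn0
    have hl := Real.log_pos hn
    have hk : 0 < κ n := by linarith
    have hn' : (0:ℝ) < n := by exact_mod_cast hn0
    rw [Real.log_div (by positivity) (by positivity), Real.log_mul (by positivity) (by positivity)]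
    field_simp; ring
  have h2 := hln.div hn1 one_ne_zero
  rw [div_one] at h2
  refine h2.congr' ?_
  filter_upwards [hκ.eventually_gt_atTop 1, eventually_gt_atTop 0] with n hn hn0
  have hl := Real.log_pos hn
  have hk : 0 < κ n := by linarith
  have hn' : (0:ℝ) < n := by exact_mod_cast hn0
  simp only [Pi.div_apply]
  field_simp

lemma numerics (A μ p κ v s η M : ℝ) (hs : s ^ 2 = v) (hs1 : 1 ≤ s) (hη : 0 < η) (hη' : η ≤ 1 / 20)
    (hM : 0 ≤ M) (hp : 0 ≤ p) (hA : 0 ≤ A) (hvκ : v ≤ κ) (hsM : 15 * M / η ≤ s) (hκη : 28 / η ≤ κ)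
    (h1 : |A / v - (1 - (1 + κ) * p)| ≤ η * A / v + M / v ^ 2 * (6 * A + 2))
    (h2 : |μ / v - p| ≤ η / v * ((A / s + s) / 2) + M / v ^ 2 * (6 * A + 3))
    (h3 : κ ^ 3 * p ≤ 6 * A + 2) : |(A - μ ^ 2) / v - 1| ≤ 7 * η := by
  have hv1 : 1 ≤ v := by rw [← hs]; nlinarith
  have hv0 : 0 < v := by linarith
  have hs0 : 0 < s := by linarith
  have hsv : s ≤ v := by rw [← hs]; nlinarith
  rw [div_le_iff₀ hη] at hsM hκη
  have hκ1 : 1 ≤ κ := by linarith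
  obtain ⟨z, rfl⟩ : ∃ z, A = z * v := ⟨A / v, by field_simp⟩
  have hz : 0 ≤ z := nonneg_of_mul_nonneg_left hA hv0
  have hMv : 15 * (M / v) ≤ η := by
    rw [← mul_div_assoc, div_le_iff₀ hv0]
    nlinarith
  have hMv0 : 0 ≤ M / v := by positivity
  have e1 : z * v / v = z := by field_simp
  have e2 : M / v ^ 2 * (6 * (z * v) + 2) ≤ M / v * (6 * z + 2) := by
    have : M / v ^ 2 * (6 * (z * v) + 2) = M / v * (6 * z + 2 / v) := by field_simp
    rw [this]
    have : 2 / v ≤ 2 := by rw [div_le_iff₀ hv0]; linarith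
    gcongr
  have e3 : η * (z * v) / v = η * z := by field_simp
  rw [e1, e3] at h1
  set q := (1 + κ) * p with hq
  have hq0 : 0 ≤ q := by positivity
  have h1' : |z - (1 - q)| ≤ 2 * η * z + η := by
    have : M / v * (6 * z + 2) ≤ (η / 15) * (6 * z + 2) :=
      mul_le_mul_of_nonneg_right (by linarith) (by positivity)
    have : 0 ≤ η * z := by positivity
    linarith
  obtain ⟨b1, b2⟩ := abs_le.1 h1'
  have hz2 : z ≤ 2 := by nlinarith
  have hκp : κ ^ 2 * p ≤ 14 := by
    have : κ * (κ ^ 2 * p) ≤ κ * 14 := by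
      have : z * v ≤ 2 * v := by gcongr
      nlinarith
    exact le_of_mul_le_mul_left this (by linarith)
  have hκp2 : 2 * (κ * p) ≤ η := by
    have : κ * (2 * (κ * p)) ≤ κ * η := by nlinarith
    exact le_of_mul_le_mul_left this (by linarith)
  have hqη : q ≤ η := by nlinarith
  have hz1 : |z - 1| ≤ 6 * η := by
    have : η * z ≤ η * 2 := by gcongr
    rw [abs_le]; constructor <;> linarith
  have hμ : |μ| ≤ 4 * η * s := by
    have f1 : |μ| ≤ v * (p + |μ / v - p|) := by
      have : |μ / v| ≤ p + |μ / v - p| := by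
        have := abs_add_le p (μ / v - p)
        rw [abs_of_nonneg hp] at this
        simpa using this
      rw [abs_div, abs_of_pos hv0, div_le_iff₀ hv0] at this
      linarith
    have f2 : v * (p + |μ / v - p|) ≤
        v * (p + (η / v * ((z * v / s + s) / 2) + M / v ^ 2 * (6 * (z * v) + 3))) := by gcongr
    have f3 : v * (p + (η / v * ((z * v / s + s) / 2) + M / v ^ 2 * (6 * (z * v) + 3))) =
        v * p + η * (s * (z + 1) / 2) + M * (6 * z + 3 / v) := by
      rw [← hs]; field_simp; ring
    have f4 : M * (6 * z + 3 / v) ≤ M * (6 * 2 + 3) := by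
      have : 3 / v ≤ 3 := by rw [div_le_iff₀ hv0]; linarith
      gcongr
    have f5 : v * p ≤ κ * p := by gcongr
    have f6 : η * (s * (z + 1) / 2) ≤ η * (s * (2 + 1) / 2) := by gcongr
    have f7 : η * 1 ≤ η * s := by gcongr
    have f8 : η * (s * (2 + 1) / 2) = 3 / 2 * (η * s) := by ring
    have f9 : s * η = η * s := by ring
    have f10 : 0 ≤ κ * p := by positivity
    linarith
  have hμ2 : μ ^ 2 / v ≤ η := by
    rw [div_le_iff₀ hv0, ← sq_abs, ← hs]
    calc |μ| ^ 2 ≤ (4 * η * s) ^ 2 := by gcongr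
      _ = (16 * η) * (η * s ^ 2) := by ring
      _ ≤ 1 * (η * s ^ 2) := by gcongr; linarith
      _ = _ := by ring
  have hμ3 : 0 ≤ μ ^ 2 / v := by positivity
  rw [sub_div, e1]
  obtain ⟨c1, c2⟩ := abs_le.1 hz1
  rw [abs_le]; constructor <;> linarith

lemma fixed_n (a m κ δ W0 W1 W2 W3 : ℝ) (n : ℕ) (ha : 0 < a) (hm : 1 ≤ m) (hn : 0 < n)
    (hδ : 0 < δ) (hδ' : δ ≤ 1 / 100)
    (hs0 : HasSum (fun k : ℕ => ((k : ℝ) + a) ^ n / (m ^ k * (k.factorial : ℝ))) W0)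
    (hs1 : HasSum (fun k : ℕ => ((k : ℝ) + a) ^ (n + 1) / (m ^ k * (k.factorial : ℝ))) W1)
    (hs2 : HasSum (fun k : ℕ => ((k : ℝ) + a) ^ (n + 2) / (m ^ k * (k.factorial : ℝ))) W2)
    (hs3 : HasSum (fun k : ℕ => ((k : ℝ) + a) ^ (n + 3) / (m ^ k * (k.factorial : ℝ))) W3)
    (hG : GG a m n κ = 0) (hG0 : Real.log 2 ≤ GG a m n 0)
    (hκ : 20 * (a + 1) / δ ≤ κ) (hκ2 : 28 / (5 * δ) ≤ κ) (hκn : κ / n ≤ δ / 20)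
    (hv : 1 + (15 * (3 / δ ^ 2) / (5 * δ)) ≤ Real.sqrt (κ ^ 2 / n)) :
    |(W2 / W0 - W1 ^ 2 / W0 ^ 2) / (κ ^ 2 / n) - 1| ≤ 35 * δ := by
  have hn' : (0 : ℝ) < n := by exact_mod_cast hn
  have hm0 : 0 < m := by linarith
  have hκ0 : 0 < κ := lt_of_lt_of_le (by positivity) hκ
  set w : ℕ → ℝ := fun k : ℕ => ((k : ℝ) + a) ^ n / (m ^ k * (k.factorial : ℝ)) with hw
  have hwpos : ∀ k, 0 < w k := fun k => by simp only [hw]; positivity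
  have hstep : ∀ k : ℕ, w (k + 1) = w k * Real.exp (GG a m n k) := by
    intro k
    have e : Real.exp (GG a m n k) = (((k : ℝ) + 1 + a) / (k + a)) ^ n / (k + 1) / m := by
      unfold GG
      rw [Real.exp_sub, Real.exp_sub, Real.exp_log hm0, Real.exp_log (by positivity),
        ← Real.log_div (by positivity) (by positivity), Real.exp_nat_mul, Real.exp_log (by positivity)]
    rw [e]
    simp only [hw]
    rw [Nat.factorial_succ, pow_succ, div_pow]
    push_cast
    field_simp
  set v := κ ^ 2 / n with hvdef
  have hv0 : 0 < v := by positivity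
  set s := Real.sqrt v with hs
  have hs2' : s ^ 2 = v := Real.sq_sqrt hv0.le
  have hM : 0 ≤ 15 * (3 / δ ^ 2) / (5 * δ) := by positivity
  have hs1' : 1 ≤ s := by linarith
  have hvκ : v ≤ κ := by
    have : v = κ / n * κ := by rw [hvdef]; ring
    rw [this]
    have : κ / n ≤ 1 := by linarith
    nlinarith
  have hpt : ∀ k : ℕ, _ := fun k => pointwise (GG a m n) κ v δ
    (GG_anti a m n ha hn'.le) hG hκ0.le hv0 hδ (by linarith) (by nlinarith)
    (fun y _ hy => window a m n κ δ ha hn' hδ (by linarith) hκ hκn hG y hy) (k : ℝ) (by positivity)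
  have st := stein w κ v s (5 * δ) (3 / δ ^ 2) W0 (W1 - (κ + a) * W0)
    (W2 - 2 * (κ + a) * W1 + (κ + a) ^ 2 * W0)
    (W3 - 3 * (κ + a) * W2 + 3 * (κ + a) ^ 2 * W1 - (κ + a) ^ 3 * W0) hwpos hv0 (by linarith)
    (by positivity) (by positivity) hκ0.le hs0
    (hasSum_of (hs1.sub (hs0.mul_left (κ + a))) (fun k => by simp only [hw]; ring) rfl)
    (hasSum_of ((hs2.sub (hs1.mul_left (2 * (κ + a)))).add (hs0.mul_left ((κ + a) ^ 2)))
      (fun k => by simp only [hw]; ring) rfl)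
    (hasSum_of (((hs3.sub (hs2.mul_left (3 * (κ + a)))).add (hs1.mul_left (3 * (κ + a) ^ 2))).sub
      (hs0.mul_left ((κ + a) ^ 3))) (fun k => by simp only [hw]; ring) rfl)
    (fun k => by
      have := mul_nonneg (hwpos k).le (hpt k).1
      rw [hstep]
      linarith)
    (fun k => by
      have h := mul_le_mul_of_nonneg_left (hpt k).2 (hwpos k).le
      have e : w k - w (k + 1) = w k * (1 - Real.exp (GG a m n k)) := by rw [hstep]; ring
      have e2 : ((k : ℝ) - κ) / v * w k - (w k - w (k + 1)) =
        w k * (((k : ℝ) - κ) / v - (1 - Real.exp (GG a m n k))) := by rw [e]; ring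
      rw [e2, e, abs_mul, abs_mul, abs_of_pos (hwpos k)]
      linarith)
    (by
      have h := hstep 0
      rw [zero_add] at h
      rw [h, mul_comm]
      refine mul_le_mul_of_nonneg_left ?_ (hwpos 0).le
      rw [Nat.cast_zero, ← Real.log_le_iff_le_exp (by norm_num)]
      exact hG0)
  obtain ⟨t1, t2, t3, t4⟩ := st
  have hW : 0 < W0 := (hwpos 0).trans_le (le_hasSum hs0 0 (fun j _ => (hwpos j).le))
  set S2 := W2 - 2 * (κ + a) * W1 + (κ + a) ^ 2 * W0 with hS2
  set S1 := W1 - (κ + a) * W0 with hS1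
  have hvar : W2 / W0 - W1 ^ 2 / W0 ^ 2 = S2 / W0 - (S1 / W0) ^ 2 := by
    rw [hS2, hS1]; field_simp; ring
  rw [hvar]
  have := numerics (S2 / W0) (S1 / W0) (w 0 / W0) κ v s (5 * δ) (3 / δ ^ 2) hs2' hs1' (by positivity)
    (by linarith) (by positivity) (div_nonneg (hwpos 0).le hW.le) (div_nonneg t4 hW.le) hvκ (by linarith)
    hκ2 ?_ ?_ ?_
  · linarith
  · have e1 : S2 / W0 / v - (1 - (1 + κ) * (w 0 / W0)) = (S2 / v - (W0 - (1 + κ) * w 0)) / W0 := by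
      field_simp
    rw [e1, abs_div, abs_of_pos hW, div_le_iff₀ hW]
    refine t1.trans (le_of_eq ?_)
    field_simp
  · have e1 : S1 / W0 / v - w 0 / W0 = (S1 / v - w 0) / W0 := by
      field_simp
    rw [e1, abs_div, abs_of_pos hW, div_le_iff₀ hW]
    refine t2.trans (le_of_eq ?_)
    field_simp
  · have e1 : κ ^ 3 * (w 0 / W0) = (κ ^ 3 * w 0) / W0 := by ring
    rw [e1, div_le_iff₀ hW]
    refine t3.trans (le_of_eq ?_)
    field_simp

/-- `T_{n+2}/T_n − T_{n+1}²/T_n² = (m²·n/log² n)·(1 + o(1))` as `n → ∞`. -/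
theorem stmt_17 (m c : ℕ) (hm : 0 < m) (hc : 0 < c) :
    Tendsto
      (fun n : ℕ =>
        ((Ttot m c (n + 2) : ℝ) / Ttot m c n -
            (Ttot m c (n + 1) : ℝ) ^ 2 / (Ttot m c n : ℝ) ^ 2) /
          ((m : ℝ) ^ 2 * n / (Real.log n) ^ 2))
      atTop (nhds 1) := by
  have hm1 : (1 : ℝ) ≤ m := by exact_mod_cast hm
  have hm0 : (0 : ℝ) < m := by linarith
  have hc0 : (0 : ℝ) < c := by exact_mod_cast hc
  set a : ℝ := c / m with ha
  have ha0 : 0 < a := by positivity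
  obtain ⟨κ, hG, hκ⟩ := exists_seq a m ha0 hm1
  have hasy := seq_asymp a m ha0 hm1 κ hG hκ
  have hU : ∀ n : ℕ, HasSum (fun k : ℕ => ((k : ℝ) + a) ^ n / ((m : ℝ) ^ k * (k.factorial : ℝ)))
      (Ttot m c n * Real.exp (1 / m) / (m : ℝ) ^ n) := by
    intro n
    refine hasSum_of ((dobinski m c hm n).div_const ((m : ℝ) ^ n)) (fun k => ?_) rfl
    have : (k : ℝ) + a = (m * k + c) / m := by rw [ha]; field_simp
    rw [this, div_pow]
    field_simp
  have hlogn : Tendsto (fun n : ℕ => Real.log n) atTop atTop :=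
    Real.tendsto_log_atTop.comp tendsto_natCast_atTop_atTop
  have hκn : Tendsto (fun n : ℕ => κ n / n) atTop (nhds 0) := by
    have h := hasy.mul (tendsto_inv_atTop_zero.comp hlogn)
    rw [mul_zero] at h
    refine h.congr' ?_
    filter_upwards [hlogn.eventually_gt_atTop 0] with n hn
    simp only [Function.comp_apply]
    field_simp
  have hvr : Tendsto (fun n : ℕ => (κ n ^ 2 / n) / ((n : ℝ) / Real.log n ^ 2)) atTop (nhds 1) := by
    have h := hasy.pow 2
    rw [one_pow] at h
    refine h.congr' ?_
    filter_upwards [hlogn.eventually_gt_atTop 0, eventually_gt_atTop 0] with n hn hn0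
    have hn' : (0:ℝ) < n := by exact_mod_cast hn0
    field_simp
  have hnl : Tendsto (fun n : ℕ => (n : ℝ) / Real.log n ^ 2) atTop atTop := by
    have h0 : Tendsto (fun x : ℝ => Real.log x ^ 2 / x) atTop (nhds 0) := by
      simpa using Real.tendsto_pow_log_div_mul_add_atTop 1 0 2 one_ne_zero
    have h1 : Tendsto (fun n : ℕ => Real.log n ^ 2 / (n : ℝ)) atTop (nhds 0) :=
      h0.comp tendsto_natCast_atTop_atTop
    have h2 : Tendsto (fun n : ℕ => Real.log n ^ 2 / (n : ℝ)) atTop (nhdsWithin 0 (Set.Ioi 0)) := by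
      refine tendsto_nhdsWithin_iff.2 ⟨h1, ?_⟩
      filter_upwards [hlogn.eventually_gt_atTop 0, eventually_gt_atTop 0] with n hn hn0
      have hn' : (0:ℝ) < n := by exact_mod_cast hn0
      exact Set.mem_Ioi.2 (by positivity)
    refine (tendsto_inv_nhdsGT_zero.comp h2).congr (fun n => ?_)
    simp
  have hvtop : Tendsto (fun n : ℕ => κ n ^ 2 / n) atTop atTop := by
    refine (hvr.pos_mul_atTop one_pos hnl).congr' ?_
    filter_upwards [hlogn.eventually_gt_atTop 0, eventually_gt_atTop 0] with n hn hn0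
    have hn' : (0:ℝ) < n := by exact_mod_cast hn0
    field_simp
  have hsq : Tendsto (fun n : ℕ => Real.sqrt (κ n ^ 2 / n)) atTop atTop :=
    Real.tendsto_sqrt_atTop.comp hvtop
  set D : ℕ → ℝ := fun n : ℕ => (Ttot m c (n + 2) : ℝ) / Ttot m c n -
            (Ttot m c (n + 1) : ℝ) ^ 2 / (Ttot m c n : ℝ) ^ 2 with hD
  have main : Tendsto (fun n : ℕ => D n / (m : ℝ) ^ 2 / (κ n ^ 2 / n)) atTop (nhds 1) := by
    rw [Metric.tendsto_nhds]
    intro ε hε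
    set δ := min (1 / 100) (ε / 70) with hδ
    have hδ0 : 0 < δ := lt_min (by norm_num) (by positivity)
    have hδ1 : δ ≤ 1 / 100 := min_le_left _ _
    have hδ2 : δ ≤ ε / 70 := min_le_right _ _
    filter_upwards [hG, (GG_top a m 0 ha0 le_rfl).eventually_ge_atTop (Real.log 2),
      hκ.eventually_ge_atTop (20 * (a + 1) / δ), hκ.eventually_ge_atTop (28 / (5 * δ)),
      hκn.eventually_le_const (show 0 < δ / 20 by positivity),
      hsq.eventually_ge_atTop (1 + (15 * (3 / δ ^ 2) / (5 * δ))), eventually_gt_atTop 0]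
      with n h1 h2 h3 h4 h5 h6 h7
    have key := fixed_n a m (κ n) δ _ _ _ _ n ha0 hm1 h7 hδ0 hδ1 (hU n) (hU (n + 1)) (hU (n + 2))
      (hU (n + 3)) h1 h2 h3 h4 h5 h6
    have e : D n / (m : ℝ) ^ 2 = Ttot m c (n + 2) * Real.exp (1 / m) / (m : ℝ) ^ (n + 2) /
        (Ttot m c n * Real.exp (1 / m) / (m : ℝ) ^ n) -
        (Ttot m c (n + 1) * Real.exp (1 / m) / (m : ℝ) ^ (n + 1)) ^ 2 /
        (Ttot m c n * Real.exp (1 / m) / (m : ℝ) ^ n) ^ 2 := by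
      simp only [hD]
      have hE := (Real.exp_pos (1 / (m : ℝ))).ne'
      generalize Real.exp (1 / (m : ℝ)) = E at *
      by_cases hT : (Ttot m c n : ℝ) = 0
      · simp [hT]
      · field_simp
        try ring
    rw [e, Real.dist_eq]
    refine lt_of_le_of_lt key ?_
    linarith
  have h := main.mul hvr
  rw [one_mul] at h
  refine h.congr' ?_
  filter_upwards [hlogn.eventually_gt_atTop 0, eventually_gt_atTop 0, hκ.eventually_gt_atTop 0]
    with n hn hn0 hk
  have hn' : (0:ℝ) < n := by exact_mod_cast hn0
  change D n / (m : ℝ) ^ 2 / (κ n ^ 2 / n) * (κ n ^ 2 / n / ((n : ℝ) / Real.log n ^ 2)) =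
    D n / ((m : ℝ) ^ 2 * n / Real.log n ^ 2)
  generalize D n = d
  field_simp
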